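/- For any x, v ∈ ℝ³ with x ≠ 0, setting H = |v|² + q/|x|, L = x × v and R = v × (x × v) + (q/2)·x/|x|, one has the algebraic identities R·L = 0 and 4|R|² = 4H|L|² + q². Moreover the vector A := (2q√H R + 4H L×R) / (4H|L|² + q²) satisfies |A|² = H, A·L = 0 and A·R = (q/2)√H. -/

import Mathlib

/-!
Since `v ⊥ L` and, by cyclicity of the triple product, `x · (v × L) = |L|²`, expanding
`R = v × L + (q/2) x/|x|` gives `|R|² = |v|²|L|² + (q/|x|)|L|² + q²/4`, that is,
`4|R|² = 4H|L|² + q²`. The denominator of `A` is therefore `4|R|²`, and as `L`, `R` and `L × R` are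
pairwise orthogonal with `|L × R| = |L||R|`, the identity `|A|² = H` is Pythagoras' theorem, while
`A · L` and `A · R` are read off from the components of `A` along `R` and `L × R`.
-/

open scoped RealInnerProductSpace

noncomputable section

/-- Euclidean three-space. -/
abbrev R3 : Type := EuclideanSpace ℝ (Fin 3)

/-- The cross product on `ℝ³`. -/
def cross3 (x y : R3) : R3 :=
  (WithLp.equiv 2 (Fin 3 → ℝ)).symm
    ![x 1 * y 2 - x 2 * y 1, x 2 * y 0 - x 0 * y 2, x 0 * y 1 - x 1 * y 0]

/-- The energy `H(x,v) = |v|² + q/|x|` of the repulsive Kepler problem. -/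
def keplerH (q : ℝ) (x v : R3) : ℝ := ‖v‖ ^ 2 + q / ‖x‖

/-- The Runge–Lenz vector `R(x,v) = v × (x × v) + (q/2)·x/|x|`. -/
def rungeLenz (q : ℝ) (x v : R3) : R3 :=
  cross3 v (cross3 x v) + (q / 2) • ‖x‖⁻¹ • x

section CrossProduct

lemma inner_cross3_self_left (a b : R3) : ⟪cross3 a b, a⟫ = 0 :=
  dot_self_cross a.ofLp b.ofLp

lemma inner_cross3_self_right (a b : R3) : ⟪cross3 a b, b⟫ = 0 :=
  dot_cross_self a.ofLp b.ofLp

lemma inner_cross3_cyclic (a b c : R3) : ⟪cross3 a b, c⟫ = ⟪cross3 b c, a⟫ :=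
  triple_product_permutation c.ofLp a.ofLp b.ofLp

lemma norm_cross3_of_inner_eq_zero {a b : R3} (hab : ⟪a, b⟫ = 0) :
    ‖cross3 a b‖ = ‖a‖ * ‖b‖ := by
  have hnorm : ‖cross3 a b‖ = ‖a‖ * ‖b‖ * Real.sin (InnerProductGeometry.angle a b) :=
    InnerProductGeometry.norm_ofLp_crossProduct a b
  rw [hnorm, InnerProductGeometry.inner_eq_zero_iff_angle_eq_pi_div_two a b |>.mp hab,
    Real.sin_pi_div_two, mul_one]

lemma norm_smul_add_smul_cross3_sq {a b : R3} (hab : ⟪a, b⟫ = 0) (s t : ℝ) :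
    ‖s • b + t • cross3 a b‖ ^ 2 = (s ^ 2 + t ^ 2 * ‖a‖ ^ 2) * ‖b‖ ^ 2 := by
  have hperp : ⟪b, cross3 a b⟫ = 0 := inner_eq_zero_symm.mp (inner_cross3_self_right a b)
  rw [norm_add_sq_real, real_inner_smul_left, real_inner_smul_right, hperp, norm_smul, norm_smul,
    norm_cross3_of_inner_eq_zero hab]
  simp only [mul_pow, Real.norm_eq_abs, sq_abs]
  ring

end CrossProduct

section RungeLenz

lemma keplerH_nonneg {q : ℝ} (hq : 0 ≤ q) (x v : R3) : 0 ≤ keplerH q x v := by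
  unfold keplerH
  positivity

lemma inner_rungeLenz_cross3 (q : ℝ) (x v : R3) : ⟪rungeLenz q x v, cross3 x v⟫ = 0 := by
  have hx : ⟪x, cross3 x v⟫ = 0 := inner_eq_zero_symm.mp (inner_cross3_self_left x v)
  simp [rungeLenz, inner_add_left, real_inner_smul_left, inner_cross3_self_right, hx]

lemma four_mul_norm_rungeLenz_sq (q : ℝ) {x : R3} (hx : x ≠ 0) (v : R3) :
    4 * ‖rungeLenz q x v‖ ^ 2 = 4 * keplerH q x v * ‖cross3 x v‖ ^ 2 + q ^ 2 := by
  have hunit : ‖‖x‖⁻¹ • x‖ = 1 := norm_smul_inv_norm (𝕜 := ℝ) hx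
  have hperp : ⟪v, cross3 x v⟫ = 0 := inner_eq_zero_symm.mp (inner_cross3_self_right x v)
  have htriple : ⟪cross3 v (cross3 x v), x⟫ = ‖cross3 x v‖ ^ 2 := by
    rw [← inner_cross3_cyclic, real_inner_self_eq_norm_sq]
  rw [rungeLenz, norm_add_sq_real, norm_cross3_of_inner_eq_zero hperp, norm_smul, hunit,
    real_inner_smul_right, real_inner_smul_right, htriple, keplerH, mul_one, Real.norm_eq_abs,
    sq_abs]
  ring

end RungeLenz

section AsymptoticAction

/-- The asymptotic action `A = (2q√H·R + 4H·L×R)/(4H|L|² + q²)`, as a function of arbitrary values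
of the energy `H`, the angular momentum `L` and the Runge–Lenz vector `R`. -/
def asymptoticAction (q H : ℝ) (L R : R3) : R3 :=
  (4 * H * ‖L‖ ^ 2 + q ^ 2)⁻¹ • ((2 * q * Real.sqrt H) • R + (4 * H) • cross3 L R)

variable {q H : ℝ} {L R : R3}

lemma norm_asymptoticAction_sq (hRL : ⟪R, L⟫ = 0)
    (hR : 4 * ‖R‖ ^ 2 = 4 * H * ‖L‖ ^ 2 + q ^ 2) (hD : 4 * H * ‖L‖ ^ 2 + q ^ 2 ≠ 0) (hH : 0 ≤ H) :
    ‖asymptoticAction q H L R‖ ^ 2 = H := by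
  have hnum : ‖(2 * q * Real.sqrt H) • R + (4 * H) • cross3 L R‖ ^ 2
      = H * (4 * H * ‖L‖ ^ 2 + q ^ 2) ^ 2 := by
    calc
      _ = ((2 * q * Real.sqrt H) ^ 2 + (4 * H) ^ 2 * ‖L‖ ^ 2) * ‖R‖ ^ 2 :=
        norm_smul_add_smul_cross3_sq (inner_eq_zero_symm.mp hRL) _ _
      _ = H * (4 * H * ‖L‖ ^ 2 + q ^ 2) * (4 * ‖R‖ ^ 2) := by
        rw [mul_pow, Real.sq_sqrt hH]
        ring
      _ = H * (4 * H * ‖L‖ ^ 2 + q ^ 2) ^ 2 := by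
        rw [hR]
        ring
  rw [asymptoticAction, norm_smul, mul_pow, hnum, Real.norm_eq_abs, sq_abs]
  field_simp

lemma inner_asymptoticAction_angularMomentum (hRL : ⟪R, L⟫ = 0) :
    ⟪asymptoticAction q H L R, L⟫ = 0 := by
  simp [asymptoticAction, real_inner_smul_left, inner_add_left, hRL, inner_cross3_self_left]

lemma inner_asymptoticAction_rungeLenz
    (hR : 4 * ‖R‖ ^ 2 = 4 * H * ‖L‖ ^ 2 + q ^ 2) (hD : 4 * H * ‖L‖ ^ 2 + q ^ 2 ≠ 0) :
    ⟪asymptoticAction q H L R, R⟫ = q / 2 * Real.sqrt H := by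
  have hnum : ⟪(2 * q * Real.sqrt H) • R + (4 * H) • cross3 L R, R⟫
      = q / 2 * Real.sqrt H * (4 * ‖R‖ ^ 2) := by
    rw [inner_add_left, real_inner_smul_left, real_inner_smul_left, inner_cross3_self_right,
      real_inner_self_eq_norm_sq]
    ring
  rw [asymptoticAction, real_inner_smul_left, hnum, hR]
  field_simp

end AsymptoticAction

theorem kepler_conserved_quantities_algebra_general (q : ℝ) (x v : R3) (hx : x ≠ 0)
    (hH : 0 ≤ keplerH q x v) (hD : 4 * keplerH q x v * ‖cross3 x v‖ ^ 2 + q ^ 2 ≠ 0) :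
    ⟪rungeLenz q x v, cross3 x v⟫ = (0 : ℝ) ∧
    4 * ‖rungeLenz q x v‖ ^ 2 = 4 * keplerH q x v * ‖cross3 x v‖ ^ 2 + q ^ 2 ∧
    (let H := keplerH q x v
     let L := cross3 x v
     let R := rungeLenz q x v
     let A := asymptoticAction q H L R
     ‖A‖ ^ 2 = H ∧ ⟪A, L⟫ = (0 : ℝ) ∧ ⟪A, R⟫ = q / 2 * Real.sqrt H) := by
  have hRL := inner_rungeLenz_cross3 q x v
  have hR := four_mul_norm_rungeLenz_sq q hx v
  exact ⟨hRL, hR, norm_asymptoticAction_sq hRL hR hD hH,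
    inner_asymptoticAction_angularMomentum hRL, inner_asymptoticAction_rungeLenz hR hD⟩

/-- For `x ≠ 0` one has `R·L = 0` and `4|R|² = 4H|L|² + q²`; moreover the asymptotic
action `A = (2q√H·R + 4H·L×R)/(4H|L|² + q²)` satisfies `|A|² = H`, `A·L = 0` and
`A·R = (q/2)√H`. -/
theorem kepler_conserved_quantities_algebra (q : ℝ) (hq : 0 < q)
    (x v : R3) (hx : x ≠ 0) :
    ⟪rungeLenz q x v, cross3 x v⟫ = (0 : ℝ) ∧
    4 * ‖rungeLenz q x v‖ ^ 2 = 4 * keplerH q x v * ‖cross3 x v‖ ^ 2 + q ^ 2 ∧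
    (let H := keplerH q x v
     let L := cross3 x v
     let R := rungeLenz q x v
     let A := (4 * H * ‖L‖ ^ 2 + q ^ 2)⁻¹ •
       ((2 * q * Real.sqrt H) • R + (4 * H) • cross3 L R)
     ‖A‖ ^ 2 = H ∧ ⟪A, L⟫ = (0 : ℝ) ∧ ⟪A, R⟫ = q / 2 * Real.sqrt H) := by
  have hH := keplerH_nonneg hq.le x v
  exact kepler_conserved_quantities_algebra_general q x v hx hH (by positivity)
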